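/- Let n ≥ 3 and let λ be a partition of n. Then Σ_{π ∈ C_λ} occ₍₁₋₂₋₃₎(π) = |C_λ| · ( C(n,3)/6 + (n+1)(3n−4)·X₁/60 + (n+1)·X₂/30 + (3n−2)·X₃/30 + X₄/15 ), where occ₍₁₋₂₋₃₎(π) = #{(i,j,k) : 1 ≤ i < j < k ≤ n, π(i) < π(j) < π(k)} is the number of occurrences of the classical pattern 123 in π. -/

import Mathlib

open Equiv Finset

/-- The conjugacy class of permutations of `Fin n` with cycle type `lam`
(cycle type includes fixed points as parts of size 1, via `Equiv.Perm.partition`). -/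
def conjClass (n : ℕ) (lam : n.Partition) : Finset (Equiv.Perm (Fin n)) :=
  Finset.univ.filter fun π => (Equiv.Perm.partition π).parts = lam.parts

/-!
Averaging over the conjugacy class replaces `π` by a uniformly random conjugate `σ π σ⁻¹`. For an
injective triple `x`, the event that `σ x` and `σ (π x)` are in the same relative order has a
probability that depends only on how the triples `x` and `π x` overlap, that is, on which of the
equations `π (x i) = x j` hold. Evaluating this probability on each of the finitely many overlaps
writes it as a polynomial in the indicators of these equations. Summing a monomial of that
polynomial over all triples counts embeddings of a small digraph (at most three vertices) into the
functional digraph of `π`, which is a polynomial in `n` and the numbers of fixed points of `π`,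
`π ^ 2` and `π ^ 3`; those are `p`, `p + 2 q` and `p + 3 r`.
-/

section Averaging

lemma card_nsmul_sum_eq_sum_sum_conj {G M : Type*} [Group G] [Fintype G] [AddCommMonoid M]
    {S : Finset G} (hS : ∀ g h, h * g * h⁻¹ ∈ S ↔ g ∈ S) (f : G → M) :
    Fintype.card G • ∑ g ∈ S, f g = ∑ g ∈ S, ∑ h, f (h * g * h⁻¹) := by
  have hconj (h : G) : ∑ g ∈ S, f (h * g * h⁻¹) = ∑ g ∈ S, f g :=
    sum_equiv (MulAut.conj h).toEquiv (fun g => (hS g h).symm) fun g _ => rfl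
  simp only [sum_comm (s := S), hconj, sum_const, card_univ]

lemma conj_mem_conjClass_iff {n : ℕ} {lam : n.Partition} (π σ : Perm (Fin n)) :
    σ * π * σ⁻¹ ∈ conjClass n lam ↔ π ∈ conjClass n lam := by
  have hconj : IsConj (σ * π * σ⁻¹) π := (isConj_iff.mpr ⟨σ, rfl⟩).symm
  simp only [conjClass, mem_filter_univ, Perm.partition_eq_of_isConj.mp hconj]

end Averaging

section SameOrder

variable {ι α β : Type*}

/-- Two families indexed by `ι` have the same relative order, i.e. they are occurrences of the same
pattern. -/
def SameOrder [LT α] [LT β] (u : ι → α) (v : ι → β) : Prop :=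
  ∀ i j, u i < u j ↔ v i < v j

instance [Fintype ι] [LT α] [LT β] [DecidableLT α] [DecidableLT β] (u : ι → α) (v : ι → β) :
    Decidable (SameOrder u v) :=
  inferInstanceAs (Decidable (∀ i j, u i < u j ↔ v i < v j))

lemma exists_perm_sameOrder [Finite ι] [LinearOrder ι] [LinearOrder α] {u : ι → α}
    (hu : u.Injective) : ∃ ρ : Perm ι, SameOrder u ρ := by
  let _ := Fintype.ofFinite ι
  have hcard : #(univ.image u) = Fintype.card ι := card_image_of_injective _ hu
  let sortValues : univ.image u ≃o Fin (Fintype.card ι) := (orderIsoOfFin _ hcard).symm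
  let enumIndices : Fin (Fintype.card ι) ≃o ι := Fintype.orderIsoFinOfCardEq ι rfl
  let ρ : ι → ι := fun i => enumIndices (sortValues ⟨u i, mem_image_of_mem u (mem_univ i)⟩)
  have hρ : SameOrder u ρ := fun i j => by simp [ρ]
  have hρ_inj : ρ.Injective := fun i j h => by simpa [ρ, hu.eq_iff] using h
  exact ⟨ofBijective ρ (Finite.injective_iff_bijective.mp hρ_inj), hρ⟩

lemma card_sameOrder_perm_comp [Fintype ι] [LinearOrder α] [LinearOrder β] [Fintype β] {g : β → α}
    (hg : g.Injective) (u v : ι → β) :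
    #{τ : Perm β | SameOrder (g ∘ τ ∘ u) (g ∘ τ ∘ v)} =
      #{τ : Perm β | SameOrder (τ ∘ u) (τ ∘ v)} := by
  obtain ⟨ρ, hρ⟩ := exists_perm_sameOrder hg
  refine card_equiv (Equiv.mulLeft ρ) fun τ => ?_
  rw [mem_filter_univ, mem_filter_univ]
  exact forall₂_congr fun i j => iff_congr (hρ _ _) (hρ _ _)

variable [Fintype ι] [LinearOrder α] [Fintype α]

lemma card_sameOrder_comp_perm [Finite β] (f : β ↪ α) (τ : Perm β) (u v : ι → β) :
    #{σ : Perm α | SameOrder (σ ∘ f ∘ τ ∘ u) (σ ∘ f ∘ τ ∘ v)} =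
      #{σ : Perm α | SameOrder (σ ∘ f ∘ u) (σ ∘ f ∘ v)} := by
  let _ := Fintype.ofFinite β
  have hτ (b : β) : τ.viaFintypeEmbedding f (f b) = f (τ b) :=
    τ.viaFintypeEmbedding_apply_image f b
  refine card_equiv (Equiv.mulRight (τ.viaFintypeEmbedding f)) fun σ => ?_
  simp only [mem_filter_univ]
  simp only [SameOrder, Function.comp_apply, coe_mulRight, Perm.mul_apply, hτ]

/-- The probability that a uniformly random permutation `σ` of `α` puts the families `u` and `v`
in the same relative order. -/
def sameOrderProb (u v : ι → α) : ℚ :=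
  #{σ : Perm α | SameOrder (σ ∘ u) (σ ∘ v)} / (Fintype.card α).factorial

lemma sameOrderProb_comp [LinearOrder β] [Fintype β] (f : β ↪ α) (u v : ι → β) :
    sameOrderProb (f ∘ u) (f ∘ v) = sameOrderProb u v := by
  have hcount : (Fintype.card β).factorial *
        #{σ : Perm α | SameOrder (σ ∘ f ∘ u) (σ ∘ f ∘ v)} =
      (Fintype.card α).factorial * #{τ : Perm β | SameOrder (τ ∘ u) (τ ∘ v)} := by
    calc
      _ = ∑ τ : Perm β, #{σ : Perm α | SameOrder (σ ∘ f ∘ τ ∘ u) (σ ∘ f ∘ τ ∘ v)} := by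
        simp only [card_sameOrder_comp_perm, sum_const, card_univ, Fintype.card_perm, smul_eq_mul]
      _ = ∑ σ : Perm α, #{τ : Perm β | SameOrder (σ ∘ f ∘ τ ∘ u) (σ ∘ f ∘ τ ∘ v)} :=
        sum_card_bipartiteAbove_eq_sum_card_bipartiteBelow _
      _ = ∑ _σ : Perm α, #{τ : Perm β | SameOrder (τ ∘ u) (τ ∘ v)} :=
        sum_congr rfl fun σ _ =>
          card_sameOrder_perm_comp (g := σ ∘ f) (σ.injective.comp f.injective) u v
      _ = _ := by simp only [sum_const, card_univ, Fintype.card_perm, smul_eq_mul]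
  rw [sameOrderProb, sameOrderProb, div_eq_div_iff (by positivity) (by positivity)]
  exact_mod_cast (mul_comm _ _).trans (hcount.trans (mul_comm _ _))

end SameOrder

section Overlap

variable {ι α : Type*} [LinearOrder ι]

/-- The union of two injective families indexed by `ι`, abstractly: `e i = some j` means that the
`i`-th point of the second family is the `j`-th point of the first, `e i = none` that it is not in
the first family. The order is an arbitrary choice that makes `sameOrderProb` computable. -/
abbrev OverlapPoint (e : ι → Option ι) : Type _ := ι ⊕ₗ {i // e i = none}

/-- The second of the two families whose overlap is `e`; the first one is `Sum.inlₗ`. -/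
def overlapImage (e : ι → Option ι) (i : ι) : OverlapPoint e :=
  match h : e i with
  | some j => Sum.inlₗ j
  | none => Sum.inrₗ ⟨i, h⟩

/-- The probability that two families with overlap `e` are put in the same relative order by a
random permutation of their union. -/
def overlapProb [Fintype ι] (e : ι → Option ι) : ℚ :=
  sameOrderProb (fun i => (Sum.inlₗ i : OverlapPoint e)) (overlapImage e)

lemma sameOrderProb_eq_overlapProb [Fintype ι] [LinearOrder α] [Fintype α] (u v : ι ↪ α) :
    sameOrderProb u v = overlapProb (Function.partialInv u ∘ v) := by
  set e := Function.partialInv u ∘ v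
  have he (i j : ι) : e i = some j ↔ u j = v i := u.injective.isPartialInv j (v i)
  let points : ι ⊕ {i // e i = none} → α := Sum.elim u (v ∘ Subtype.val)
  have hpoints : points.Injective :=
    u.injective.sumElim (v.injective.comp Subtype.val_injective) fun j i hji => by
      simpa [i.2] using (he i j).mpr hji
  let f : OverlapPoint e ↪ α := ⟨points ∘ ofLex, hpoints.comp ofLex.injective⟩
  have hv : v = f ∘ overlapImage e := by
    ext i
    simp only [Function.comp_apply, overlapImage]
    split
    next j hj => exact ((he i j).mp hj).symm
    next => rfl
  calc
    sameOrderProb u v = sameOrderProb (f ∘ fun i => Sum.inlₗ i) (f ∘ overlapImage e) := by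
      rw [← hv]; rfl
    _ = overlapProb e := sameOrderProb_comp f _ _

end Overlap

section IncreasingOcc

variable {ι α : Type*} [LinearOrder ι]

lemma eq_one_of_strictMono [Finite ι] {s : Perm ι} (hs : StrictMono s) : s = 1 :=
  Equiv.ext fun i => DFunLike.congr_fun
    (Subsingleton.elim (hs.orderIsoOfSurjective s s.surjective) (OrderIso.refl ι)) i

variable [Fintype ι] [LinearOrder α] [Fintype α]

open scoped Classical in
/-- The number of occurrences in `π` of the increasing pattern with positions indexed by `ι`. -/
noncomputable def increasingOcc (ι : Type*) [Fintype ι] [LinearOrder ι] (π : Perm α) : ℕ :=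
  #{x : ι ↪ α | StrictMono x ∧ StrictMono (π ∘ x)}

/- Every embedding `y` is uniquely `x ∘ s` with `x` increasing and `s` a permutation of `ι`. -/
lemma factorial_mul_increasingOcc (π : Perm α) :
    (Fintype.card ι).factorial * increasingOcc ι π = #{x : ι ↪ α | SameOrder x (π ∘ x)} := by
  classical
  rw [← Fintype.card_perm, ← card_univ, increasingOcc, ← card_product]
  refine card_bij (fun t _ => t.1.toEmbedding.trans t.2) ?_ ?_ ?_
  · rintro ⟨s, x⟩ h
    obtain ⟨hx, hπx⟩ := (mem_filter_univ _).mp (mem_product.mp h).2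
    exact (mem_filter_univ _).mpr fun i j => hx.lt_iff_lt.trans hπx.lt_iff_lt.symm
  · rintro ⟨s, x⟩ hsx ⟨t, y⟩ hty h
    have hx := ((mem_filter_univ _).mp (mem_product.mp hsx).2).1
    have hy := ((mem_filter_univ _).mp (mem_product.mp hty).2).1
    have heq (i : ι) : x (s i) = y (t i) := DFunLike.congr_fun h i
    have hst : s * t⁻¹ = 1 := eq_one_of_strictMono fun i j hij => by
      simpa [← hx.lt_iff_lt, heq, hy.lt_iff_lt] using hij
    obtain rfl := mul_inv_eq_one.mp hst
    exact Prod.ext rfl (Function.Embedding.ext fun i => by simpa using heq (s.symm i))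
  · intro y hy
    obtain ⟨ρ, hρ⟩ := exists_perm_sameOrder y.injective
    have hyρ : StrictMono (y ∘ ρ.symm) := fun i j hij => (hρ _ _).mpr (by simpa using hij)
    have hπyρ : StrictMono (π ∘ y ∘ ρ.symm) := fun i j hij =>
      ((mem_filter_univ _).mp hy _ _).mp (hyρ hij)
    refine ⟨(ρ, ρ.symm.toEmbedding.trans y), ?_, by ext; simp⟩
    exact mem_product.mpr ⟨mem_univ _, (mem_filter_univ _).mpr ⟨hyρ, hπyρ⟩⟩

lemma factorial_mul_sum_increasingOcc_conj (π : Perm α) :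
    ((Fintype.card ι).factorial : ℚ) * ∑ σ : Perm α, (increasingOcc ι (σ * π * σ⁻¹) : ℚ) =
      (Fintype.card α).factorial * ∑ x : ι ↪ α, sameOrderProb x (π ∘ x) := by
  have hconj (σ : Perm α) : #{x : ι ↪ α | SameOrder x ((σ * π * σ⁻¹ : Perm α) ∘ x)} =
      #{x : ι ↪ α | SameOrder (σ ∘ x) (σ ∘ π ∘ x)} := by
    refine (card_equiv (Equiv.embeddingCongr (.refl ι) σ) fun x => ?_).symm
    simp only [mem_filter_univ]
    simp [SameOrder]
  have hcount (x : ι ↪ α) : (#{σ : Perm α | SameOrder (σ ∘ x) (σ ∘ π ∘ x)} : ℚ) =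
      (Fintype.card α).factorial * sameOrderProb x (π ∘ x) := by
    rw [sameOrderProb, mul_div_cancel₀ _ (by positivity)]
  simp only [mul_sum, ← hcount]
  norm_cast
  simp only [factorial_mul_increasingOcc, hconj]
  exact sum_card_bipartiteAbove_eq_sum_card_bipartiteBelow _

end IncreasingOcc

section ArcMatrix

variable {α : Type*} [DecidableEq α]

/-- The adjacency matrix of the digraph with an arc from `x` to `y` whenever `e x = some y`. -/
def arcMatrix (e : α → Option α) : Matrix α α ℚ :=
  .of fun x y => if e x = some y then 1 else 0

/-- A polynomial in the entries of an arc matrix whose symmetrisation over relabellings of `Fin 3`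
is `overlapProb`. The overlap probabilities are `1/6` without arcs, `4/15` for a fixed point,
`7/60` for an arc, `1/2` for two fixed points, `1/6` for a fixed point and a disjoint arc, `0` for a
swap, `1/12` for a path with two arcs, `1` for three fixed points, `0` for a fixed point and a swap,
and `0` for a 3-cycle. The coefficient of a pattern of arcs is the Möbius inverse of these values
over sub-patterns, divided by the number of automorphisms of the pattern; it vanishes for a fixed
point and a swap. -/
def overlapPoly (E : Matrix (Fin 3) (Fin 3) ℚ) : ℚ :=
  1 / 36 + E 0 0 / 20 - E 0 1 / 20 + E 0 0 * E 1 1 / 15 - E 0 0 * E 1 2 / 20 - E 0 1 * E 1 0 / 30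
    + E 0 1 * E 1 2 / 60 + E 0 0 * E 1 1 * E 2 2 / 45 - E 0 1 * E 1 2 * E 2 0 / 45

lemma overlapProb_eq_sum_overlapPoly : ∀ e : Fin 3 → Option (Fin 3),
    (∀ i j k, e i = some k → e j = some k → i = j) →
      overlapProb e = ∑ s : Perm (Fin 3), overlapPoly ((arcMatrix e).submatrix s s) := by
  decide +kernel

lemma arcMatrix_some_apply (π : Perm α) (x y : α) :
    arcMatrix (some ∘ π) x y = if π x = y then 1 else 0 := by
  simp [arcMatrix]

lemma arcMatrix_partialInv {ι : Type*} [DecidableEq ι] (π : Perm α) (x : ι ↪ α) :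
    arcMatrix (Function.partialInv x ∘ π ∘ x) = (arcMatrix (some ∘ π)).submatrix x x := by
  ext i j
  have hinv : Function.partialInv x (π (x i)) = some j ↔ π (x i) = x j :=
    (x.injective.isPartialInv j (π (x i))).trans eq_comm
  simp [arcMatrix, hinv]

lemma sum_sameOrderProb_fin_three {α : Type*} [LinearOrder α] [Fintype α] (π : Perm α) :
    ∑ x : Fin 3 ↪ α, sameOrderProb x (π ∘ x) =
      6 * ∑ x : Fin 3 ↪ α, overlapPoly ((arcMatrix (some ∘ π)).submatrix x x) := by
  let E := arcMatrix (some ∘ π)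
  have hprob (x : Fin 3 ↪ α) : sameOrderProb x (π ∘ x) =
      ∑ s : Perm (Fin 3), overlapPoly (E.submatrix (x ∘ s) (x ∘ s)) := by
    have hinj (i j k : Fin 3) (hi : (Function.partialInv x ∘ π ∘ x) i = some k)
        (hj : (Function.partialInv x ∘ π ∘ x) j = some k) : i = j := by
      have hi' := (x.injective.isPartialInv k (π (x i))).mp hi
      have hj' := (x.injective.isPartialInv k (π (x j))).mp hj
      exact x.injective (π.injective (hi'.symm.trans hj'))
    calc
      _ = overlapProb (Function.partialInv x ∘ π ∘ x) :=
        sameOrderProb_eq_overlapProb x (x.trans π.toEmbedding)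
      _ = _ := by
        rw [overlapProb_eq_sum_overlapPoly _ hinj, arcMatrix_partialInv]
        simp only [Matrix.submatrix_submatrix, E]
  have hrelabel (s : Perm (Fin 3)) : ∑ x : Fin 3 ↪ α, overlapPoly (E.submatrix (x ∘ s) (x ∘ s)) =
      ∑ x : Fin 3 ↪ α, overlapPoly (E.submatrix x x) :=
    (Equiv.embeddingCongr s.symm (.refl α)).sum_comp fun x => overlapPoly (E.submatrix x x)
  simp only [hprob]
  rw [sum_comm]
  simp [hrelabel, Fintype.card_perm, Nat.factorial, E]

end ArcMatrix

section EmbeddingFinThree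

variable {α : Type*} [Fintype α]

lemma sum_embedding_fin_three_eq_sum_filter [DecidableEq α] {M : Type*} [AddCommMonoid M]
    (f : α → α → α → M) :
    ∑ x : Fin 3 ↪ α, f (x 0) (x 1) (x 2) =
      ∑ t : α × α × α with t.1 ≠ t.2.1 ∧ t.1 ≠ t.2.2 ∧ t.2.1 ≠ t.2.2, f t.1 t.2.1 t.2.2 := by
  refine sum_bij (fun x _ => (x 0, x 1, x 2)) (fun x _ => by simp) ?_ ?_ fun _ _ => rfl
  · intro x _ y _ hxy
    ext i
    fin_cases i <;> simp_all
  · rintro ⟨x, y, z⟩ hxyz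
    have hinj : Function.Injective ![x, y, z] := fun i j => by
      fin_cases i <;> fin_cases j <;> simp_all [eq_comm]
    exact ⟨⟨_, hinj⟩, mem_univ _, rfl⟩

lemma increasingOcc_fin_three [LinearOrder α] (π : Perm α) :
    increasingOcc (Fin 3) π = #{t : α × α × α |
      t.1 < t.2.1 ∧ t.2.1 < t.2.2 ∧ π t.1 < π t.2.1 ∧ π t.2.1 < π t.2.2} := by
  classical
  have hmono (f : Fin 3 → α) : StrictMono f ↔ f 0 < f 1 ∧ f 1 < f 2 := by
    simp [Fin.strictMono_iff_lt_succ, Fin.forall_fin_two]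
  simp only [increasingOcc, card_filter, hmono, Function.comp_apply, sum_filter,
    sum_embedding_fin_three_eq_sum_filter fun x y z =>
      if (x < y ∧ y < z) ∧ π x < π y ∧ π y < π z then 1 else 0]
  exact sum_congr rfl fun t _ => by grind

lemma sum_embedding_fin_three (f : α → α → α → ℚ) :
    ∑ x : Fin 3 ↪ α, f (x 0) (x 1) (x 2) =
      ∑ x, ∑ y, ∑ z, f x y z - ∑ x, ∑ y, f x x y - ∑ x, ∑ y, f x y x - ∑ x, ∑ y, f x y y
        + 2 * ∑ x, f x x x := by
  classical
  have hsieve (x y z : α) : (if x ≠ y ∧ x ≠ z ∧ y ≠ z then f x y z else 0) =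
      f x y z - (if x = y then f x x z else 0) - (if x = z then f x y x else 0)
        - (if y = z then f x y y else 0)
        + 2 * (if x = y then if x = z then f x x x else 0 else 0) := by
    by_cases hxy : x = y <;> by_cases hyz : y = z <;> by_cases hxz : x = z <;> simp_all
    ring
  simp only [sum_embedding_fin_three_eq_sum_filter, sum_filter, Fintype.sum_prod_type, hsieve,
    sum_add_distrib, sum_sub_distrib, ← mul_sum, sum_ite_irrel, sum_ite_eq, mem_univ, if_true,
    sum_const_zero]

lemma card_embedding_fin_three :
    (Fintype.card (Fin 3 ↪ α) : ℚ) =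
      Fintype.card α * (Fintype.card α - 1) * (Fintype.card α - 2) := by
  have hsieve := sum_embedding_fin_three fun _ _ _ : α => 1
  simp only [sum_const, card_univ, nsmul_eq_mul, mul_one] at hsieve
  rw [hsieve]
  ring

end EmbeddingFinThree

section PatternCounts

variable {α : Type*} [DecidableEq α] (π : Perm α)

local notation "E" => arcMatrix (some ∘ π)
local notation "N" => (Fintype.card α : ℚ)

lemma loop_mul_arc_from (x y : α) : E x x * E x y = if x = y then E x x else 0 := by
  grind [arcMatrix_some_apply]

lemma loop_mul_arc_to (x y : α) : E x x * E y x = if x = y then E x x else 0 := by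
  grind [arcMatrix_some_apply, π.injective.eq_iff]

lemma arc_mul_loop (x y : α) : E x y * E y y = if x = y then E x x else 0 := by
  grind [arcMatrix_some_apply, π.injective.eq_iff]

variable [Fintype α]

/-- The number of fixed points, as a rational number. -/
def numFixed (π : Perm α) : ℚ := #{x | π x = x}

lemma sum_arc_mul (x : α) (f : α → ℚ) : ∑ y, E x y * f y = f (π x) := by
  simp [arcMatrix_some_apply]

lemma sum_arc (x : α) : ∑ y, E x y = 1 := by
  simpa using sum_arc_mul π x 1

lemma sum_loop : ∑ x, E x x = numFixed π := by
  simp [arcMatrix_some_apply, numFixed]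

lemma sum_arc_apply : ∑ x, E (π x) x = numFixed (π ^ 2) := by
  simp [arcMatrix_some_apply, numFixed, pow_succ]

lemma sum_arc_apply_apply : ∑ x, E (π (π x)) x = numFixed (π ^ 3) := by
  simp [arcMatrix_some_apply, numFixed, pow_succ]

lemma sum_embedding_loop :
    ∑ x : Fin 3 ↪ α, E (x 0) (x 0) = numFixed π * (N - 1) * (N - 2) := by
  rw [sum_embedding_fin_three fun x _ _ => E x x]
  simp only [sum_const, card_univ, nsmul_eq_mul, ← mul_sum, sum_loop]
  ring

lemma sum_embedding_arc :
    ∑ x : Fin 3 ↪ α, E (x 0) (x 1) = (N - numFixed π) * (N - 2) := by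
  rw [sum_embedding_fin_three fun x y _ => E x y]
  simp only [sum_const, card_univ, nsmul_eq_mul, ← mul_sum, sum_arc, mul_one, sum_loop]
  ring

lemma sum_embedding_two_loops :
    ∑ x : Fin 3 ↪ α, E (x 0) (x 0) * E (x 1) (x 1) =
      numFixed π * (numFixed π - 1) * (N - 2) := by
  rw [sum_embedding_fin_three fun x y _ => E x x * E y y]
  simp only [sum_const, card_univ, nsmul_eq_mul, ← mul_sum, ← sum_mul, sum_loop,
    loop_mul_arc_from, if_true]
  ring

lemma sum_embedding_loop_arc :
    ∑ x : Fin 3 ↪ α, E (x 0) (x 0) * E (x 1) (x 2) = numFixed π * (N - numFixed π) := by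
  rw [sum_embedding_fin_three fun x y z => E x x * E y z]
  simp only [← mul_sum, ← sum_mul, sum_arc, mul_one, sum_const, card_univ, nsmul_eq_mul, sum_loop,
    loop_mul_arc_from, loop_mul_arc_to, sum_ite_eq, mem_univ, if_true]
  ring

lemma sum_embedding_swap :
    ∑ x : Fin 3 ↪ α, E (x 0) (x 1) * E (x 1) (x 0) =
      (numFixed (π ^ 2) - numFixed π) * (N - 2) := by
  rw [sum_embedding_fin_three fun x y _ => E x y * E y x]
  simp only [sum_const, card_univ, nsmul_eq_mul, ← mul_sum, sum_arc_mul π _ (E · _),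
    sum_arc_apply, loop_mul_arc_from, if_true, sum_loop]
  ring

lemma sum_embedding_path :
    ∑ x : Fin 3 ↪ α, E (x 0) (x 1) * E (x 1) (x 2) = N - numFixed (π ^ 2) := by
  rw [sum_embedding_fin_three fun x y z => E x y * E y z]
  simp only [← mul_sum, sum_arc, mul_one, sum_const, card_univ, nsmul_eq_mul, loop_mul_arc_from,
    sum_ite_eq, mem_univ, if_true, sum_loop, sum_arc_mul π _ (E · _), sum_arc_apply, arc_mul_loop]
  ring

lemma sum_embedding_three_loops :
    ∑ x : Fin 3 ↪ α, E (x 0) (x 0) * E (x 1) (x 1) * E (x 2) (x 2) =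
      numFixed π * (numFixed π - 1) * (numFixed π - 2) := by
  have hxyx (x y : α) : E x x * (E y y * E x x) = E x x * E y y := by
    rw [mul_left_comm, loop_mul_arc_from, if_pos rfl, mul_comm]
  rw [sum_embedding_fin_three fun x y z => E x x * E y y * E z z]
  simp only [mul_assoc, hxyx, ← mul_sum, ← sum_mul, sum_loop, loop_mul_arc_from, if_true]
  ring

lemma sum_embedding_threeCycle :
    ∑ x : Fin 3 ↪ α, E (x 0) (x 1) * E (x 1) (x 2) * E (x 2) (x 0) =
      numFixed (π ^ 3) - numFixed π := by
  have hwalk (x : α) : ∑ y, ∑ z, E x y * E y z * E z x = E (π (π x)) x := by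
    simp only [mul_assoc, ← mul_sum, sum_arc_mul π _ (E · x), sum_arc_mul π _ fun y => E (π y) x]
  have hxxy (x y : α) : E x x * E x y * E y x = if x = y then E x x else 0 := by
    grind [arcMatrix_some_apply]
  have hxyx (x y : α) : E x y * E y x * E x x = if x = y then E x x else 0 := by
    grind [arcMatrix_some_apply]
  have hxyy (x y : α) : E x y * E y y * E y x = if x = y then E x x else 0 := by
    grind [arcMatrix_some_apply]
  rw [sum_embedding_fin_three fun x y z => E x y * E y z * E z x]
  simp only [hwalk, hxxy, hxyx, hxyy, sum_arc_apply_apply, sum_ite_eq, mem_univ, if_true, sum_loop]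
  ring

lemma sum_embedding_overlapPoly :
    ∑ x : Fin 3 ↪ α, overlapPoly (Matrix.submatrix E x x) =
      N * (N - 1) * (N - 2) / 36 + numFixed π * (N - 1) * (N - 2) / 20
        - (N - numFixed π) * (N - 2) / 20 + numFixed π * (numFixed π - 1) * (N - 2) / 15
        - numFixed π * (N - numFixed π) / 20 - (numFixed (π ^ 2) - numFixed π) * (N - 2) / 30
        + (N - numFixed (π ^ 2)) / 60 + numFixed π * (numFixed π - 1) * (numFixed π - 2) / 45
        - (numFixed (π ^ 3) - numFixed π) / 45 := by
  simp only [overlapPoly, Matrix.submatrix_apply, sum_add_distrib, sum_sub_distrib, ← sum_div,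
    sum_const, card_univ, nsmul_eq_mul, mul_one, card_embedding_fin_three, sum_embedding_loop,
    sum_embedding_arc, sum_embedding_two_loops, sum_embedding_loop_arc, sum_embedding_swap,
    sum_embedding_path, sum_embedding_three_loops, sum_embedding_threeCycle]

end PatternCounts

section CycleCounts

variable {α : Type*} [Fintype α] [DecidableEq α] (π : Perm α)

lemma numFixed_eq_count_one : numFixed π = π.partition.parts.count 1 := by
  have hcycle : π.cycleType.count 1 = 0 := Multiset.count_eq_zero.mpr fun h =>
    absurd (Perm.two_le_of_mem_cycleType h) (by norm_num)
  have hfixed : ({x | π x = x} : Finset α) = π.supportᶜ := by ext; simp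
  rw [numFixed, hfixed, card_compl, Perm.parts_partition, Multiset.count_add, hcycle, zero_add,
    Multiset.count_replicate_self]

lemma card_filter_cycleFactorsFinset (d : ℕ) :
    #{c ∈ π.cycleFactorsFinset | #c.support = d} = π.cycleType.count d := by
  simp only [Perm.cycleType_def, Multiset.count_map, Function.comp_apply, eq_comm (a := d)]
  rfl

lemma card_filter_card_support_cycleOf {d : ℕ} (hd : d ≠ 0) :
    #{x | #(π.cycleOf x).support = d} = d * π.cycleType.count d := by
  have hunion : ({x | #(π.cycleOf x).support = d} : Finset α) =
      {c ∈ π.cycleFactorsFinset | #c.support = d}.biUnion Perm.support := by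
    ext x
    rw [mem_filter_univ, mem_biUnion]
    constructor
    · intro hx
      have hmem : x ∈ π.support := by
        by_contra hfix
        simp [Perm.support_cycleOf_eq_nil_iff.mpr hfix, hd.symm] at hx
      exact ⟨π.cycleOf x, mem_filter.mpr ⟨Perm.cycleOf_mem_cycleFactorsFinset_iff.mpr hmem, hx⟩,
        Perm.mem_support_cycleOf_iff.mpr ⟨.refl _ _, hmem⟩⟩
    · rintro ⟨c, hc, hxc⟩
      obtain ⟨hcπ, hcd⟩ := mem_filter.mp hc
      rw [← Perm.cycle_is_cycleOf hxc hcπ, hcd]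
  have hdisj : (π.cycleFactorsFinset : Set (Perm α)).PairwiseDisjoint Perm.support :=
    fun c hc c' hc' hne => (π.cycleFactorsFinset_pairwise_disjoint hc hc' hne).disjoint_support
  rw [hunion, card_biUnion (hdisj.subset (coe_subset.mpr (filter_subset _ _))),
    sum_const_nat fun c hc => (mem_filter.mp hc).2, card_filter_cycleFactorsFinset, mul_comm]

lemma pow_prime_apply_eq_self_and_ne_iff {d : ℕ} (hd : d.Prime) (x : α) :
    (π ^ d) x = x ∧ π x ≠ x ↔ #(π.cycleOf x).support = d := by
  by_cases hx : π x = x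
  · simp [hx, π.cycleOf_eq_one_iff.mpr hx, hd.ne_zero.symm]
  have hcycle := π.isCycle_cycleOf hx
  have hpow : π.cycleOf x ^ d = 1 ↔ (π ^ d) x = x := by
    rw [hcycle.pow_eq_one_iff' (x := x) (by simpa using hx), Perm.cycleOf_pow_apply_self]
  rw [and_iff_left hx, ← hpow, ← hcycle.orderOf, orderOf_eq_prime_iff (hp := ⟨hd⟩),
    and_iff_left hcycle.ne_one]

lemma numFixed_pow_prime {d : ℕ} (hd : d.Prime) :
    numFixed (π ^ d) = π.partition.parts.count 1 + d * π.partition.parts.count d := by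
  have hfixed (x : α) : (π ^ d) x = x ∧ π x = x ↔ π x = x :=
    and_iff_right_of_imp fun h => Perm.pow_apply_eq_self_of_apply_eq_self h d
  have hsplit : #{x | (π ^ d) x = x} = #{x | π x = x} + d * π.cycleType.count d := by
    rw [← card_filter_add_card_filter_not (fun x => π x = x), filter_filter, filter_filter]
    simp only [hfixed, ← ne_eq, pow_prime_apply_eq_self_and_ne_iff π hd,
      card_filter_card_support_cycleOf π hd.ne_zero]
  have hcount : π.partition.parts.count d = π.cycleType.count d := by
    rw [← Perm.filter_parts_partition_eq_cycleType, Multiset.count_filter_of_pos hd.two_le]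
  rw [← numFixed_eq_count_one, hcount, numFixed, hsplit, numFixed, Nat.cast_add, Nat.cast_mul]

end CycleCounts

lemma cast_choose_three (n : ℕ) : (n.choose 3 : ℚ) = n * (n - 1) * (n - 2) / 6 := by
  simp [Nat.cast_choose_eq_descPochhammer_div, descPochhammer_succ_right, Nat.factorial]

lemma sum_increasingOcc_conj {n : ℕ} (π : Perm (Fin n)) {p q r : ℚ}
    (hp : p = π.partition.parts.count 1) (hq : q = π.partition.parts.count 2)
    (hr : r = π.partition.parts.count 3) :
    ∑ σ : Perm (Fin n), (increasingOcc (Fin 3) (σ * π * σ⁻¹) : ℚ) = n.factorial *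
      ((n.choose 3 : ℚ) / 6 + (n + 1) * (3 * n - 4) * (p - 1) / 60
        + (n + 1) * ((p - 1) * (p - 2) / 2 + q - 1) / 30
        + (3 * n - 2) * ((p - 1) * (p - 2) / 2 - q) / 30
        + ((p - 1) * (p - 2) * (p - 3) / 3 - p - r + 2) / 15) := by
  have h1 : numFixed π = p := (numFixed_eq_count_one π).trans hp.symm
  have h2 : numFixed (π ^ 2) = p + 2 * q := by
    rw [numFixed_pow_prime π Nat.prime_two, hp, hq, Nat.cast_ofNat]
  have h3 : numFixed (π ^ 3) = p + 3 * r := by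
    rw [numFixed_pow_prime π Nat.prime_three, hp, hr, Nat.cast_ofNat]
  have havg := factorial_mul_sum_increasingOcc_conj (ι := Fin 3) π
  simp only [sum_sameOrderProb_fin_three, sum_embedding_overlapPoly, h1, h2, h3, Fintype.card_fin,
    Nat.factorial] at havg
  rw [cast_choose_three]
  linear_combination havg / 6

theorem stmt7 (n : ℕ) (hn : 3 ≤ n) (lam : n.Partition)
    (p q r X₁ X₂ X₃ X₄ : ℚ)
    (hp : p = (lam.parts.count 1 : ℚ)) (hq : q = (lam.parts.count 2 : ℚ))
    (hr : r = (lam.parts.count 3 : ℚ))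
    (hX1 : X₁ = p - 1) (hX2 : X₂ = (p - 1) * (p - 2) / 2 + q - 1)
    (hX3 : X₃ = (p - 1) * (p - 2) / 2 - q)
    (hX4 : X₄ = (p - 1) * (p - 2) * (p - 3) / 3 - p - r + 2) :
    (∑ π ∈ conjClass n lam,
      ((((Finset.univ : Finset (Fin n × Fin n × Fin n)).filter fun x =>
          x.1 < x.2.1 ∧ x.2.1 < x.2.2 ∧ π x.1 < π x.2.1 ∧ π x.2.1 < π x.2.2).card : ℚ)))
    = ((conjClass n lam).card : ℚ) *
      ((n.choose 3 : ℚ) / 6 + ((n : ℚ) + 1) * (3 * (n : ℚ) - 4) * X₁ / 60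
        + ((n : ℚ) + 1) * X₂ / 30 + (3 * (n : ℚ) - 2) * X₃ / 30 + X₄ / 15) := by
  simp only [← increasingOcc_fin_three]
  have havg := card_nsmul_sum_eq_sum_sum_conj conj_mem_conjClass_iff
    (S := conjClass n lam) fun π => (increasingOcc (Fin 3) π : ℚ)
  have hconst (π : Perm (Fin n)) (hπ : π ∈ conjClass n lam) := by
    have hparts : π.partition.parts = lam.parts := (mem_filter_univ π).mp hπ
    exact sum_increasingOcc_conj π (hparts ▸ hp) (hparts ▸ hq) (hparts ▸ hr)
  rw [sum_congr rfl hconst, sum_const, Fintype.card_perm, Fintype.card_fin, nsmul_eq_mul,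
    nsmul_eq_mul, mul_left_comm] at havg
  rw [hX1, hX2, hX3, hX4]
  exact mul_left_cancel₀ (Nat.cast_ne_zero.mpr n.factorial_ne_zero) havg
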